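/- Suppose the ground truth reward r_G satisfies the reward structure assumption and let B = max_{y∈Y} ‖φ(y)‖. Then for every θ ∈ ℝ^D, the gradient of the expected reward satisfies ‖∇V_G(θ)‖ ≤ 2 B (Δ1 + Δ2)(1 − π_θ(y_med)). -/

import Mathlib

open scoped BigOperators RealInnerProductSpace

noncomputable def policy {Y : Type*} [Fintype Y] {D : ℕ}
    (φ : Y → EuclideanSpace ℝ (Fin D)) (θ : EuclideanSpace ℝ (Fin D)) (y : Y) : ℝ :=
  Real.exp ⟪φ y, θ⟫ / ∑ z, Real.exp ⟪φ z, θ⟫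

noncomputable def expReward {Y : Type*} [Fintype Y] {D : ℕ}
    (φ : Y → EuclideanSpace ℝ (Fin D)) (r : Y → ℝ) (θ : EuclideanSpace ℝ (Fin D)) : ℝ :=
  ∑ y, policy φ θ y * r y

lemma policy_sum {Y : Type*} [Fintype Y] [Nonempty Y] {D : ℕ}
    (φ : Y → EuclideanSpace ℝ (Fin D)) (θ : EuclideanSpace ℝ (Fin D)) :
    ∑ y, policy φ θ y = 1 := by
  have hZ : 0 < ∑ z, Real.exp ⟪φ z, θ⟫ :=
    Finset.sum_pos (fun z _ => Real.exp_pos _) Finset.univ_nonempty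
  unfold policy
  rw [← Finset.sum_div, div_self hZ.ne']

lemma policy_nonneg {Y : Type*} [Fintype Y] {D : ℕ}
    (φ : Y → EuclideanSpace ℝ (Fin D)) (θ : EuclideanSpace ℝ (Fin D)) (y : Y) :
    0 ≤ policy φ θ y := by
  unfold policy
  positivity

lemma policy_hasFDerivAt {Y : Type*} [Fintype Y] [Nonempty Y] {D : ℕ}
    (φ : Y → EuclideanSpace ℝ (Fin D)) (θ : EuclideanSpace ℝ (Fin D)) (y : Y) :
    HasFDerivAt (fun θ => policy φ θ y)
      (policy φ θ y • innerSL ℝ (φ y - ∑ z, policy φ θ z • φ z)) θ := by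
  have hZ : 0 < ∑ z, Real.exp ⟪φ z, θ⟫ :=
    Finset.sum_pos (fun z _ => Real.exp_pos _) Finset.univ_nonempty
  have he : ∀ z, HasFDerivAt (fun t => Real.exp ⟪φ z, t⟫)
      (Real.exp ⟪φ z, θ⟫ • innerSL ℝ (φ z)) θ := fun z =>
    HasFDerivAt.exp ((innerSL ℝ (φ z)).hasFDerivAt (x := θ))
  have hs : HasFDerivAt (fun t => ∑ z, Real.exp ⟪φ z, t⟫)
      (∑ z, Real.exp ⟪φ z, θ⟫ • innerSL ℝ (φ z)) θ :=
    HasFDerivAt.fun_sum (fun z _ => he z)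
  have hi := (hasDerivAt_inv hZ.ne').comp_hasFDerivAt θ hs
  have hm := (he y).mul hi
  refine (hm.congr_fderiv ?_).congr_of_eventuallyEq
    (Filter.Eventually.of_forall fun t => ?_)
  · ext v
    have h2 : ∑ z, policy φ θ z * ⟪φ z, v⟫
        = (∑ z, Real.exp ⟪φ z, θ⟫ * ⟪φ z, v⟫) / ∑ z, Real.exp ⟪φ z, θ⟫ := by
      unfold policy
      rw [Finset.sum_div]
      exact Finset.sum_congr rfl fun z _ => by ring
    simp only [ContinuousLinearMap.add_apply, ContinuousLinearMap.smul_apply,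
      ContinuousLinearMap.sum_apply, innerSL_apply_apply, smul_eq_mul, inner_sub_left,
      sum_inner, real_inner_smul_left, Function.comp, h2]
    unfold policy
    field_simp
    ring
  · simp [policy, div_eq_mul_inv, Function.comp]

theorem grad_norm_bound {Y : Type*} [Fintype Y] {D : ℕ}
    (φ : Y → EuclideanSpace ℝ (Fin D)) (hφ : ∀ y, φ y ≠ 0)
    (rG : Y → ℝ) (hrG : ∀ y, rG y ∈ Set.Icc (-1 : ℝ) 1)
    (ystar ymed ybad : Y) (Ybad : Finset Y) (hybad : ybad ∈ Ybad)
    (hsm : ystar ≠ ymed) (hsb : ystar ∉ Ybad) (hmb : ymed ∉ Ybad)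
    (hcover : ∀ y : Y, y = ystar ∨ y = ymed ∨ y ∈ Ybad)
    (hr1 : rG ymed < rG ystar) (hr2 : 0 < rG ymed)
    (hr3 : ∀ y ∈ Ybad, rG y ≤ 0)
    (hr4 : ∀ y ∈ Ybad, rG y = rG ybad)
    (Δ1 Δ2 : ℝ) (hΔ1 : Δ1 = rG ystar - rG ymed) (hΔ2 : Δ2 = rG ymed - rG ybad)
    (B : ℝ) (hB : B = Finset.univ.sup' ⟨ystar, Finset.mem_univ ystar⟩ fun y => ‖φ y‖)
    (θ : EuclideanSpace ℝ (Fin D)) :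
    ‖gradient (expReward φ rG) θ‖ ≤ 2 * B * (Δ1 + Δ2) * (1 - policy φ θ ymed) := by
  classical
  haveI : Nonempty Y := ⟨ystar⟩
  have hnB : ∀ y, ‖φ y‖ ≤ B := fun y => by
    rw [hB]
    exact Finset.le_sup' (fun y => ‖φ y‖) (Finset.mem_univ y)
  have hB0 : 0 ≤ B := (norm_nonneg _).trans (hnB ystar)
  have hsum := policy_sum φ θ
  have hp := policy_nonneg φ θ
  set m := ∑ z, policy φ θ z • φ z with hm
  have hmB : ‖m‖ ≤ B := by
    calc ‖m‖ ≤ ∑ z, ‖policy φ θ z • φ z‖ := norm_sum_le _ _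
      _ ≤ ∑ z, policy φ θ z * B := Finset.sum_le_sum fun z _ => by
          rw [norm_smul, Real.norm_of_nonneg (hp z)]
          exact mul_le_mul_of_nonneg_left (hnB z) (hp z)
      _ = B := by rw [← Finset.sum_mul, hsum, one_mul]
  have hd : HasFDerivAt (expReward φ rG)
      (∑ y, rG y • (policy φ θ y • innerSL ℝ (φ y - m))) θ :=
    HasFDerivAt.fun_sum fun y _ => (policy_hasFDerivAt φ θ y).mul_const (rG y)
  have hz : ∑ y, policy φ θ y • (φ y - m) = 0 := by
    simp only [smul_sub, Finset.sum_sub_distrib, ← Finset.sum_smul, hsum, one_smul]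
    rw [← hm, sub_self]
  have heq : ∑ y, rG y • (policy φ θ y • innerSL ℝ (φ y - m))
      = innerSL ℝ (∑ y, ((rG y - rG ymed) * policy φ θ y) • (φ y - m)) := by
    have h1 : ∑ y, ((rG y - rG ymed) * policy φ θ y) • (φ y - m)
        = ∑ y, rG y • (policy φ θ y • (φ y - m)) := by
      simp only [sub_mul, sub_smul, Finset.sum_sub_distrib, mul_smul, ← Finset.smul_sum, hz,
        smul_zero, sub_zero]
    rw [h1]
    simp only [map_sum, map_smul]
  rw [gradient, hd.fderiv, heq, LinearIsometryEquiv.norm_map, innerSL_apply_norm]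
  have hb := hr3 ybad hybad
  have habs : ∀ y, |rG y - rG ymed| ≤ Δ1 + Δ2 := by
    intro y
    rw [abs_le]
    rcases hcover y with h | h | h
    · subst h; constructor <;> linarith
    · subst h; constructor <;> linarith
    · have := hr4 y h
      constructor <;> linarith
  have h1 : 1 - policy φ θ ymed = ∑ y ∈ Finset.univ.erase ymed, policy φ θ y := by
    rw [← hsum, ← Finset.add_sum_erase _ _ (Finset.mem_univ ymed)]
    ring
  rw [← Finset.add_sum_erase _ _ (Finset.mem_univ ymed), sub_self, zero_mul, zero_smul, zero_add,
    h1, Finset.mul_sum]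
  refine (norm_sum_le _ _).trans (Finset.sum_le_sum fun y _ => ?_)
  rw [norm_smul, norm_mul, Real.norm_of_nonneg (hp y), Real.norm_eq_abs]
  have h2 : ‖φ y - m‖ ≤ 2 * B := (norm_sub_le _ _).trans (by linarith [hnB y])
  have h3 : 0 ≤ Δ1 + Δ2 := (abs_nonneg _).trans (habs y)
  calc |rG y - rG ymed| * policy φ θ y * ‖φ y - m‖
      ≤ (Δ1 + Δ2) * policy φ θ y * (2 * B) :=
        mul_le_mul (mul_le_mul_of_nonneg_right (habs y) (hp y)) h2 (norm_nonneg _)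
          (mul_nonneg h3 (hp y))
    _ = 2 * B * (Δ1 + Δ2) * policy φ θ y := by ring
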